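/- Let α be a partition with all parts at least 2, ℓ(α) ≥ 4, and overlapping partition p = (3,2,1,0,…,0) (that is, p_1 = 3, p_2 = 2, p_3 = 1, and p_i = 0 for i ≥ 4). Then R_α^p has full Schur support, i.e. [R_α^p] = [α, (|α|−3, 3)], if and only if α_1 < Σ_{q=2}^{ℓ(α)} α_q − 2 and α_2 < Σ_{q=3}^{ℓ(α)} α_q. -/

import Mathlib

namespace RibbonSupport

/-- A partition: a weakly decreasing list of positive integers. -/
def IsPartition (a : List ℕ) : Prop := a.Pairwise (· ≥ ·) ∧ ∀ x ∈ a, 0 < x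

/-- All parts of the list are at least `m`. -/
def PartsGE (a : List ℕ) (m : ℕ) : Prop := ∀ x ∈ a, m ≤ x

/-- Dominance order `lam ⪯ mu` on partitions of the same size. -/
def DomLE (lam mu : List ℕ) : Prop :=
  lam.sum = mu.sum ∧ ∀ i, (lam.take i).sum ≤ (mu.take i).sum

/-- The number of nonzero parts. -/
def lenp (p : List ℕ) : ℕ := p.countP (fun x => decide (x ≠ 0))

/-- `p` is an overlapping partition for the monotone ribbon with row lengths `a`:
`p` has the same length as `a`, its last entry is `0`, and consecutive entries
decrease by `0` or `1`. -/
def IsOverlapSeq (a p : List ℕ) : Prop :=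
  p.length = a.length ∧ p.getD (a.length - 1) 0 = 0 ∧
    ∀ i, i + 1 < a.length →
      p.getD i 0 = p.getD (i + 1) 0 ∨ p.getD i 0 = p.getD (i + 1) 0 + 1

/-- Rows `i` and `i+1` (0-based, top to bottom) of `R_a^p` overlap
(share exactly one column) exactly when `p_i = p_{i+1} + 1`. -/
def ovOf (p : List ℕ) : ℕ → Bool := fun i => decide (p.getD i 0 = p.getD (i + 1) 0 + 1)

def rowOffset (a : List ℕ) (i : ℕ) : ℕ := (a.take i).sum

/-- `w` is the reading word (rows right-to-left, top to bottom) of a semistandard filling of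
the ribbon with row lengths `a` (top to bottom) in which consecutive rows `i`, `i+1` share
exactly one column when `ov i = true` and no column otherwise.  Semistandardness amounts to:
within each row block the word is weakly decreasing (rows weakly increase left to right), and
at each overlapping gap the word strictly increases (columns strictly increase downwards). -/
def IsRibbonWord (a : List ℕ) (ov : ℕ → Bool) (w : List ℕ) : Prop :=
  w.length = a.sum ∧
  (∀ i j, i < a.length → j + 1 < a.getD i 0 →
    w.getD (rowOffset a i + j + 1) 0 ≤ w.getD (rowOffset a i + j) 0) ∧
  (∀ i, i + 1 < a.length → ov i = true →
    w.getD (rowOffset a (i + 1) - 1) 0 < w.getD (rowOffset a (i + 1)) 0)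

/-- Yamanouchi (lattice) word: each prefix has at least as many letters `j` as `j+1`. -/
def IsYam (w : List ℕ) : Prop := ∀ k j, (w.take k).count (j + 2) ≤ (w.take k).count (j + 1)

/-- The word `w` has content `nu` (and only positive letters). -/
def HasContent (w : List ℕ) (nu : List ℕ) : Prop :=
  (∀ j, w.count (j + 1) = nu.getD j 0) ∧ w.count 0 = 0

/-- There is an LR filling of the ribbon `(a, ov)` with content `nu`. -/
def InSupportOv (a : List ℕ) (ov : ℕ → Bool) (nu : List ℕ) : Prop :=
  ∃ w : List ℕ, IsRibbonWord a ov w ∧ IsYam w ∧ HasContent w nu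

/-- `nu` is in the Schur support of the monotone ribbon `R_a^p`. -/
def InSupport (a p nu : List ℕ) : Prop := InSupportOv a (ovOf p) nu

/-- `nu` is in the Schur support of the connected ribbon `R_a`. -/
def InSupportConn (a nu : List ℕ) : Prop := InSupportOv a (fun _ => true) nu

/-- `nu` belongs to the Schur interval `[a, (|a| - p₁, p₁)]` in dominance order. -/
def InInterval (a p nu : List ℕ) : Prop :=
  DomLE a nu ∧ DomLE nu [a.sum - p.getD 0 0, p.getD 0 0]

/-- The Schur support of `R_a^p`, as a set of partitions. -/
def SupportSet (a p : List ℕ) : Set (List ℕ) := {nu | IsPartition nu ∧ InSupport a p nu}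

/-- The Schur interval of `R_a^p`, as a set of partitions. -/
def IntervalSet (a p : List ℕ) : Set (List ℕ) := {nu | IsPartition nu ∧ InInterval a p nu}

/-- `R_a^p` has full Schur support. -/
def FullSupport (a p : List ℕ) : Prop := SupportSet a p = IntervalSet a p

/-- The Schur support of the connected ribbon `R_a`, as a set of partitions. -/
def SupportSetConn (a : List ℕ) : Set (List ℕ) := {nu | IsPartition nu ∧ InSupportConn a nu}

/-- `ϱ_i` (1-based `i`): `Σ_{q=i+1}^{ℓ(a)} a_q − p_{i+1} + 1`. -/
def rho (a p : List ℕ) (i : ℕ) : ℕ := (a.drop i).sum + 1 - p.getD i 0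

/-- Entry `j` (1-based) of the `i`-witness vector: `[ϱ_i − a_j]₊`. -/
def wit (a p : List ℕ) (i j : ℕ) : ℕ := rho a p i - a.getD (j - 1) 0

/-- Size of the `i`-witness vector. -/
def witSize (a p : List ℕ) (i : ℕ) : ℕ := ∑ j ∈ Finset.Icc 1 i, wit a p i j

/-! ### Tableaux -/

/-- Cells (0-based `(row, column)`) of the Young diagram of `lam`. -/
def cells (lam : List ℕ) : Finset (ℕ × ℕ) :=
  (Finset.range lam.length ×ˢ Finset.range (lam.sum + 1)).filter
    (fun x => x.2 < lam.getD x.1 0)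

/-- `T` is a semistandard Young tableau of shape `lam` and content `al`
(normalized to vanish off the diagram). -/
def IsTab (lam al : List ℕ) (T : ℕ × ℕ → ℕ) : Prop :=
  (∀ x, x ∉ cells lam → T x = 0) ∧
  (∀ x ∈ cells lam, 1 ≤ T x) ∧
  (∀ i c, (i, c + 1) ∈ cells lam → T (i, c) ≤ T (i, c + 1)) ∧
  (∀ i c, (i + 1, c) ∈ cells lam → T (i, c) < T (i + 1, c)) ∧
  (∀ k, ((cells lam).filter (fun x => T x = k + 1)).card = al.getD k 0)

/-- Standardization of a tableau: entries are renumbered `1, …, N` in increasing order of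
value, entries of equal value being numbered from southwest to northeast (by column). -/
def stdz (lam : List ℕ) (T : ℕ × ℕ → ℕ) : ℕ × ℕ → ℕ := fun x =>
  if x ∈ cells lam then
    ((cells lam).filter (fun y => T y < T x ∨ (T y = T x ∧ y.2 < x.2))).card + 1
  else 0

/-- `n` is a descent of the standard tableau `U`: the entry `n+1` lies in a strictly
lower row than the entry `n`. -/
def IsDescent (lam : List ℕ) (U : ℕ × ℕ → ℕ) (n : ℕ) : Prop :=
  ∃ x ∈ cells lam, ∃ y ∈ cells lam, U x = n ∧ U y = n + 1 ∧ x.1 < y.1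

/-- `S(al)`: the set of proper partial sums of the composition `al`. -/
def Sset (al : List ℕ) : Set ℕ := {n | ∃ k, 0 < k ∧ k < al.length ∧ n = (al.take k).sum}

/-- `s ∈ D(T)`: some entry `s+1` of `T` lies in a strictly lower row than some entry `s`. -/
def TabDescent (lam : List ℕ) (T : ℕ × ℕ → ℕ) (s : ℕ) : Prop :=
  ∃ x ∈ cells lam, ∃ y ∈ cells lam, T x = s ∧ T y = s + 1 ∧ x.1 < y.1

/-- The word `w_{T̂}` of `T`: its `u`-th letter (1-based) is the 1-based row index of the
entry `u` of the standardization `T̂` of `T`. -/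
def wordOf (lam : List ℕ) (T : ℕ × ℕ → ℕ) : List ℕ :=
  (List.range lam.sum).map fun n =>
    ∑ x ∈ (cells lam).filter (fun x => stdz lam T x = n + 1), (x.1 + 1)

/-- `j ∈ {2, …, ℓ(al)}` is a critical number of `T ∈ Tab(lam, al)`:
`w_{α_1+⋯+α_{j-1}} = w_{α_1+⋯+α_{j-1}+1}` in the word of `T`. -/
def CriticalNum (lam al : List ℕ) (T : ℕ × ℕ → ℕ) (j : ℕ) : Prop :=
  2 ≤ j ∧ j ≤ al.length ∧
    (wordOf lam T).getD ((al.take (j - 1)).sum - 1) 0 =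
      (wordOf lam T).getD ((al.take (j - 1)).sum) 0

/-- `j ∈ {2, …, ℓ(al)}` is a negligible critical number of `T`:
`w_{α_1+⋯+α_{j-1}} > w_{α_1+⋯+α_{j-1}+1}` in the word of `T`. -/
def NegligibleNum (lam al : List ℕ) (T : ℕ × ℕ → ℕ) (j : ℕ) : Prop :=
  2 ≤ j ∧ j ≤ al.length ∧
    (wordOf lam T).getD ((al.take (j - 1)).sum) 0 <
      (wordOf lam T).getD ((al.take (j - 1)).sum - 1) 0

/-- The overlapping partition of the ribbon encoded by its gap pattern `b`
(`b j = true` iff rows `j` and `j+1`, 0-based, overlap). -/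
def povOf (b : List Bool) : List ℕ :=
  (List.range (b.length + 1)).map fun i => (b.drop i).count true

/-! ### Connected ribbons with rows in arbitrary order -/

/-- Starting column (0-based) of row `i` of the connected ribbon with row lengths `b`. -/
def startConn (b : List ℕ) (i : ℕ) : ℕ := (b.drop (i + 1)).sum + (i + 1) - b.length

/-- Number of columns of the connected ribbon with row lengths `b`. -/
def ncols (b : List ℕ) : ℕ := b.sum + 1 - b.length

/-- Length of column `c` of the connected ribbon with row lengths `b`. -/
def colLen (b : List ℕ) (c : ℕ) : ℕ :=
  ((Finset.range b.length).filter
    (fun i => startConn b i ≤ c ∧ c < startConn b i + b.getD i 0)).card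

/-- Deletion rank of row `j`: the number of rows deleted strictly before row `j` when one
repeatedly deletes a longest remaining row in highest (most northern) position. -/
def delRank (g : List ℕ) (j : ℕ) : ℕ :=
  ((Finset.range g.length).filter
    (fun j' => g.getD j 0 < g.getD j' 0 ∨ (g.getD j' 0 = g.getD j 0 ∧ j' < j))).card

/-- The overlapping partition of the connected ribbon with row lengths `g`:
its `(d+1)`-st entry is the number of length-two columns of the ribbon remaining
after deleting `d` rows as above, i.e. the number of adjacent pairs of surviving rows. -/
def ppiList (g : List ℕ) : List ℕ :=
  (List.range g.length).map fun d =>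
    ((Finset.range (g.length - 1)).filter
      (fun j => d ≤ delRank g j ∧ d ≤ delRank g (j + 1))).card



set_option maxHeartbeats 2000000 in
/-- Inductive step for at most four rows: peeling off a horizontal strip. -/
theorem arith_step (n1 n2 n3 n4 m a1 a2 a3 N : ℕ) (h12 : n2 ≤ n1) (h23 : n3 ≤ n2) (h34 : n4 ≤ n3)
    (hm : 2 ≤ m) (ha3 : m ≤ a3) (ha2 : a3 ≤ a2) (ha1 : a2 ≤ a1) (hN : a1 + a2 + a3 + m ≤ N)
    (hs : n1 + n2 + n3 + n4 = N + m) (d1 : a1 ≤ n1) (d2 : a1 + a2 ≤ n1 + n2)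
    (d3 : a1 + a2 + a3 ≤ n1 + n2 + n3)
    (d4 : a1 + a2 + a3 + m ≤ n1 + n2 + n3 + n4)
    (c1 : n1 + 3 ≤ N + m) (c2 : n1 ≤ a1 + 1 → n2 + 2 + a1 ≤ N + m)
    (c3 : n3 + 1 + a1 + a2 ≤ N + m) :
    ∃ k1 k2 k3 k4, k1 ≤ n1 ∧ k2 ≤ n2 ∧ k3 ≤ n3 ∧ k4 ≤ n4 ∧ n2 ≤ k1 ∧ n3 ≤ k2 ∧ n4 ≤ k3 ∧
      k1 + k2 + k3 + k4 = N ∧ a1 ≤ k1 ∧ a1 + a2 ≤ k1 + k2 ∧ a1 + a2 + a3 ≤ k1 + k2 + k3 ∧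
      k1 + 3 ≤ N ∧ (k1 ≤ a1 + 1 → k2 + 2 + a1 ≤ N) ∧ k3 + 1 + a1 + a2 ≤ N := by
  obtain ⟨g1, hg1⟩ : ∃ g1, g1 = min n1 (n1 + n2 - m) := ⟨_, rfl⟩
  by_cases f1 : N < g1 + 3
  · refine ⟨N - 3, min n2 (3 - n4), min n3 (3 - min n2 (3 - n4)),
      3 - min n2 (3 - n4) - min n3 (3 - min n2 (3 - n4)), ?_⟩
    have : n3 + n4 ≤ 2 := by omega
    rcases Nat.lt_or_ge n4 1 with h | h
    · have h0 : n4 = 0 := by omega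
      subst h0
      rcases Nat.lt_or_ge n2 3 with h' | h'
      · have : n2 = 2 := by omega
        subst this
        omega
      · rw [show min n2 (3 - 0) = 3 by omega]
        omega
    · have h1 : n4 = 1 := by omega
      have h3 : n3 = 1 := by omega
      subst h1 h3
      rcases Nat.lt_or_ge n2 2 with h' | h'
      · have : n2 = 1 := by omega
        subst this
        omega
      · rw [show min n2 (3 - 1) = 2 by omega]
        omega
  · obtain ⟨g2, hg2⟩ : ∃ g2, g2 = min (n1 + n2) (n1 + n2 + n3 - m) := ⟨_, rfl⟩
    obtain ⟨g3, hg3⟩ : ∃ g3, g3 = min (n1 + n2 + n3) N := ⟨_, rfl⟩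
    by_cases f2 : g1 ≤ a1 + 1 ∧ N < g2 - g1 + 2 + a1
    · rcases Nat.lt_or_ge a1 g1 with e | e
      · refine ⟨g1, N - g1 - 1, 1, 0, ?_⟩
        omega
      · refine ⟨g1, N - g1 - 2, min n3 2, 2 - min n3 2, ?_⟩
        omega
    · by_cases f3 : N < g3 - g2 + 1 + a1 + a2
      · refine ⟨n1, n2, n3 + n4 - m - 1, 1, ?_⟩
        omega
      · refine ⟨g1, g2 - g1, g3 - g2, N - g3, ?_⟩
        omega

set_option maxHeartbeats 2000000 in
/-- Base case (four rows): the intermediate shapes. -/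
theorem arith_base (n1 n2 n3 n4 a1 a2 a3 a4 : ℕ) (h12 : n2 ≤ n1) (h23 : n3 ≤ n2) (h34 : n4 ≤ n3)
    (hm : 2 ≤ a4) (ha3 : a4 ≤ a3) (ha2 : a3 ≤ a2) (ha1 : a2 ≤ a1) 
    (hs : n1 + n2 + n3 + n4 = a1 + a2 + a3 + a4) (d1 : a1 ≤ n1) (d2 : a1 + a2 ≤ n1 + n2)
    (d3 : a1 + a2 + a3 ≤ n1 + n2 + n3)
    (c1 : n1 + 3 ≤ a1 + a2 + a3 + a4) (c2 : n1 ≤ a1 + 1 → n2 + 2 ≤ a2 + a3 + a4)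
    (c3 : n3 + 1 ≤ a3 + a4) :
    ∃ x y u v t, x + y = a1 + a2 ∧ u + v + t = a1 + a2 + a3 ∧ a1 ≤ x ∧ y ≤ a1 ∧ 1 ≤ y ∧
      x ≤ u ∧ v ≤ x ∧ y ≤ v ∧ t ≤ y ∧ u ≤ n1 ∧ n2 ≤ u ∧ v ≤ n2 ∧ n3 ≤ v ∧ t ≤ n3 ∧ n4 ≤ t ∧
      (1 ≤ t ∨ (y < v ∧ a1 < x)) ∧
      (t < n4 + t ∨ (t < n3 ∧ (x < u ∨ y < v)) ∨ (v < n2 ∧ x < u)) := by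
  rcases Nat.eq_zero_or_pos n4 with h4 | h4
  · subst h4
    rcases Nat.lt_or_ge n3 1 with h3 | h3
    · have : n3 = 0 := by omega
      subst this
      obtain ⟨u, hu⟩ : ∃ u, u = min n1 (a1 + a2 + a3 - 2) := ⟨_, rfl⟩
      obtain ⟨x, hx⟩ : ∃ x, x = min (u - 1) (a1 + a2 - 1) := ⟨_, rfl⟩
      refine ⟨x, a1 + a2 - x, u, a1 + a2 + a3 - u, 0, ?_⟩
      omega
    · rcases Nat.lt_or_ge n3 2 with h3 | h3
      · have : n3 = 1 := by omega
        subst this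
        obtain ⟨u, hu⟩ : ∃ u, u = min n1 (a1 + a2 + a3 - 2) := ⟨_, rfl⟩
        obtain ⟨x, hx⟩ : ∃ x, x = min u (a1 + a2 - 1) := ⟨_, rfl⟩
        refine ⟨x, a1 + a2 - x, u, a1 + a2 + a3 - u, 0, ?_⟩
        omega
      · obtain ⟨t, ht⟩ : ∃ t, t = max (n3 - a4) 1 := ⟨_, rfl⟩
        obtain ⟨u, hu⟩ : ∃ u, u = min n1 (a1 + a2 + a3 - t - n3) := ⟨_, rfl⟩
        obtain ⟨x, hx⟩ : ∃ x, x = min u (a1 + a2 - t) := ⟨_, rfl⟩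
        refine ⟨x, a1 + a2 - x, u, a1 + a2 + a3 - t - u, t, ?_⟩
        omega
  · obtain ⟨u, hu⟩ : ∃ u, u = min n1 (n1 + n2 - a4) := ⟨_, rfl⟩
    obtain ⟨v, hv⟩ : ∃ v, u + v = min (n1 + n2) (n1 + n2 + n3 - a4) := by
      refine ⟨min (n1 + n2) (n1 + n2 + n3 - a4) - u, ?_⟩
      omega
    obtain ⟨x, hx⟩ : ∃ x, x = min u (u + v - a3) := ⟨_, rfl⟩
    have e1 : a1 ≤ u ∧ u ≤ n1 ∧ n2 ≤ u := by omega
    have e2 : v ≤ n2 ∧ n3 ≤ v ∧ u + v ≤ a1 + a2 + a3 - 1 ∧ a1 + a2 ≤ u + v := by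
      rcases Nat.lt_or_ge n2 a4 with h | h
      · have : u = n1 + n2 - a4 := by omega
        omega
      · have : u = n1 := by omega
        omega
    have e3 : a1 + a2 + a3 ≤ n3 + u + v ∧ n4 + u + v ≤ a1 + a2 + a3 := by omega
    clear hu hv d2 d3 c1 c2 c3
    obtain ⟨t, ht⟩ : ∃ t, u + v + t = a1 + a2 + a3 := ⟨a1 + a2 + a3 - u - v, by omega⟩
    obtain ⟨y, hy⟩ : ∃ y, x + y = a1 + a2 := ⟨a1 + a2 - x, by omega⟩
    rcases Nat.lt_or_ge v a3 with h | h
    · have : x = u + v - a3 := by omega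
      have e4 : y = t := by omega
      have e5 : a1 ≤ x := by omega
      refine ⟨x, y, u, v, t, hy, ht, e5, ?_, ?_, ?_, ?_, ?_, ?_, ?_, ?_, ?_, ?_, ?_, ?_, Or.inl ?_,
        Or.inl ?_⟩ <;> omega
    · have : x = u := by omega
      refine ⟨x, y, u, v, t, hy, ht, ?_, ?_, ?_, ?_, ?_, ?_, ?_, ?_, ?_, ?_, ?_, ?_, ?_, Or.inl ?_,
        Or.inl ?_⟩ <;> omega

/-- Letters of a horizontal strip `d`, read from the bottom row to the top row. -/
def blk (d : ℕ → ℕ) : ℕ → List ℕ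
  | 0 => []
  | L + 1 => List.replicate (d L) (L + 1) ++ blk d L

theorem blk_mem {d : ℕ → ℕ} {L x : ℕ} (h : x ∈ blk d L) : 1 ≤ x ∧ x ≤ L := by
  induction L with
  | zero => simp [blk] at h
  | succ L ih =>
    simp only [blk, List.mem_append, List.mem_replicate] at h
    rcases h with h | h
    · omega
    · have := ih h; omega

theorem blk_length (d : ℕ → ℕ) (L : ℕ) : (blk d L).length = ∑ j ∈ Finset.range L, d j := by
  induction L with
  | zero => simp [blk]
  | succ L ih => simp [blk, ih, Finset.sum_range_succ, add_comm]

theorem blk_pairwise (d : ℕ → ℕ) (L : ℕ) : (blk d L).Pairwise (· ≥ ·) := by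
  induction L with
  | zero => simp [blk]
  | succ L ih =>
    simp only [blk, List.pairwise_append]
    refine ⟨by simp [List.pairwise_replicate], ih, ?_⟩
    intro x hx y hy
    have := blk_mem hy
    have := List.eq_of_mem_replicate hx
    show y ≤ x
    omega

theorem blk_count (d : ℕ → ℕ) (L j : ℕ) : (blk d L).count (j + 1) = if j < L then d j else 0 := by
  induction L with
  | zero => simp [blk]
  | succ L ih =>
    simp only [blk, List.count_append, ih, List.count_replicate]
    rcases Nat.lt_trichotomy j L with h | h | h
    · have : ¬ (L = j) := by omega
      simp [h, this, Nat.lt_succ_of_lt h]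
    · subst h; simp
    · have h1 : ¬ (L = j) := by omega
      have h2 : ¬ (j < L) := by omega
      have h3 : ¬ (j < L + 1) := by omega
      simp [h1, h2, h3]

theorem blk_mem_of_pos {d : ℕ → ℕ} {L q : ℕ} (hq : q < L) (h : 0 < d q) : q + 1 ∈ blk d L := by
  rw [← List.count_pos_iff, blk_count]
  simp [hq, h]

theorem getD_mono_of_pairwise {l : List ℕ} (h : l.Pairwise (· ≥ ·)) {i j : ℕ} (hij : i ≤ j) :
    l.getD j 0 ≤ l.getD i 0 := by
  rcases Nat.lt_or_ge j l.length with hj | hj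
  · rw [List.getD_eq_getElem _ _ hj, List.getD_eq_getElem _ _ (by omega : i < l.length)]
    rcases Nat.eq_or_lt_of_le hij with e | e
    · subst e; exact le_refl _
    · exact (List.pairwise_iff_getElem.mp h) i j (by omega) hj e
  · rw [List.getD_eq_default _ _ hj]; exact Nat.zero_le _

theorem mem_getD {l : List ℕ} {x : ℕ} (h : x ∈ l) : ∃ i < l.length, l.getD i 0 = x := by
  obtain ⟨i, hi, e⟩ := List.mem_iff_getElem.mp h
  exact ⟨i, hi, by rw [List.getD_eq_getElem _ _ hi, e]⟩

theorem getD_mem {l : List ℕ} {i : ℕ} (h : i < l.length) : l.getD i 0 ∈ l := by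
  rw [List.getD_eq_getElem _ _ h]; exact List.getElem_mem h

theorem take_succ_sum (a : List ℕ) (i : ℕ) :
    (a.take (i + 1)).sum = (a.take i).sum + a.getD i 0 := by
  induction a generalizing i with
  | nil => simp
  | cons x a ih =>
    cases i with
    | zero => simp
    | succ i => simp [ih, add_assoc]

theorem take_sum_le (a : List ℕ) (i : ℕ) : (a.take i).sum ≤ a.sum := by
  conv_rhs => rw [← List.take_append_drop i a, List.sum_append]
  omega

theorem take_sum_mono (a : List ℕ) {i j : ℕ} (h : i ≤ j) : (a.take i).sum ≤ (a.take j).sum := by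
  induction j, h using Nat.le_induction with
  | base => exact le_refl _
  | succ j _ ih => rw [take_succ_sum]; omega

theorem take_sum_eq (a : List ℕ) (i : ℕ) :
    (a.take i).sum = ∑ j ∈ Finset.range i, a.getD j 0 := by
  induction i with
  | zero => simp
  | succ i ih => rw [take_succ_sum, ih, Finset.sum_range_succ]

/-- Existence of a filling with content `f`, whose last letter is at most `q + 1`. -/
def Sup (a : List ℕ) (ov : ℕ → Bool) (f : ℕ → ℕ) (q : ℕ) : Prop :=
  ∃ w : List ℕ, IsRibbonWord a ov w ∧ IsYam w ∧ (∀ j, w.count (j + 1) = f j) ∧ w.count 0 = 0 ∧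
    w.getD (a.sum - 1) 0 ≤ q + 1

theorem sup_nil (ov : ℕ → Bool) (q : ℕ) : Sup [] ov (fun _ => 0) q := by
  refine ⟨[], ⟨by simp, by simp, by simp⟩, ?_, by simp, by simp, by simp⟩
  intro k j
  simp

theorem sup_step {a : List ℕ} {ov : ℕ → Bool} {g f : ℕ → ℕ} {q p m L : ℕ}
    (hpos : ∀ x ∈ a, 0 < x) (h : Sup a ov g q) (hgf : ∀ j, g j ≤ f j)
    (hfg : ∀ j, f (j + 1) ≤ g j) (hz : ∀ k, L ≤ k → f k = 0)
    (hm : ∑ j ∈ Finset.range L, f j = ∑ j ∈ Finset.range L, g j + m)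
    (hgap : a = [] ∨ ov (a.length - 1) = false ∨ ∃ q', q < q' ∧ g q' < f q')
    (hp : g p < f p) : Sup (a ++ [m]) ov f p := by
  obtain ⟨w, ⟨hlen, hrow, hov⟩, hy, hc, hc0, hl⟩ := h
  obtain ⟨d, hd⟩ : ∃ d : ℕ → ℕ, d = fun j => f j - g j := ⟨_, rfl⟩
  have hdj : ∀ j, g j + d j = f j := fun j => by have := hgf j; simp only [hd]; omega
  have hbl : (blk d L).length = m := by
    rw [blk_length]
    have : ∑ j ∈ Finset.range L, f j = ∑ j ∈ Finset.range L, g j + ∑ j ∈ Finset.range L, d j := by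
      rw [← Finset.sum_add_distrib]
      exact Finset.sum_congr rfl (fun j _ => (hdj j).symm)
    omega
  have hcnt : ∀ j, (blk d L).count (j + 1) = d j := by
    intro j
    rw [blk_count]
    split_ifs with hj
    · rfl
    · have h1 := hz j (by omega)
      have h2 := hdj j
      omega
  have hpL : p < L := by
    by_contra hc
    have := hz p (by omega)
    omega
  have hpm : p + 1 ∈ blk d L := blk_mem_of_pos hpL (by have := hdj p; omega)
  have hm0 : 0 < m := by rw [← hbl]; exact List.length_pos_of_mem hpm
  refine ⟨w ++ blk d L, ⟨?_, ?_, ?_⟩, ?_, ?_, ?_, ?_⟩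
  · simp [hlen, hbl]
  · intro i j hi hj
    rcases Nat.lt_or_ge i a.length with hia | hia
    · have e1 : rowOffset (a ++ [m]) i = rowOffset a i := by
        simp only [rowOffset]; rw [List.take_append_of_le_length (by omega)]
      have e2 : (a ++ [m]).getD i 0 = a.getD i 0 := List.getD_append _ _ _ _ hia
      rw [e1]
      rw [e2] at hj
      have h3 := take_succ_sum a i
      have h4 := take_sum_le a (i + 1)
      have h5 : rowOffset a i = (a.take i).sum := rfl
      rw [List.getD_append _ _ _ _ (by omega), List.getD_append _ _ _ _ (by omega)]
      exact hrow i j hia hj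
    · have hi' : i = a.length := by simp at hi; omega
      subst hi'
      have e1 : rowOffset (a ++ [m]) a.length = w.length := by
        simp [rowOffset, hlen]
      rw [e1, List.getD_append_right _ _ _ _ (by omega), List.getD_append_right _ _ _ _ (by omega)]
      exact getD_mono_of_pairwise (blk_pairwise d L) (by omega)
  · intro i hi hovi
    rcases Nat.lt_or_ge (i + 1) a.length with hia | hia
    · have e1 : rowOffset (a ++ [m]) (i + 1) = rowOffset a (i + 1) := by
        simp only [rowOffset]; rw [List.take_append_of_le_length (by omega)]
      rw [e1]
      have h3 := take_succ_sum a (i + 1)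
      have h4 := take_sum_le a (i + 1 + 1)
      have h5 : rowOffset a (i + 1) = (a.take (i + 1)).sum := rfl
      have h6 := hpos _ (getD_mem hia)
      rw [List.getD_append _ _ _ _ (by omega), List.getD_append _ _ _ _ (by omega)]
      exact hov i hia hovi
    · have hi' : i + 1 = a.length := by simp at hi; omega
      have hne : a ≠ [] := by rintro rfl; simp at hi'
      rcases hgap with hg | hg | ⟨q', hq', hg⟩
      · exact absurd hg hne
      · rw [show a.length - 1 = i by omega] at hg
        rw [hg] at hovi; exact absurd hovi (by simp)
      · have e1 : rowOffset (a ++ [m]) (i + 1) = w.length := by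
          rw [hi']; simp [rowOffset, hlen]
        have hs : 0 < a.sum := by
          obtain ⟨x, l, rfl⟩ := List.exists_cons_of_ne_nil hne
          have := hpos x (by simp)
          simp; omega
        rw [e1, List.getD_append _ _ _ _ (by omega), List.getD_append_right _ _ _ _ (by omega),
          hlen]
        have hq'L : q' < L := by
          by_contra hc
          have := hz q' (by omega)
          omega
        obtain ⟨k, hk, e⟩ := mem_getD (blk_mem_of_pos hq'L (d := d) (by have := hdj q'; omega))
        have := getD_mono_of_pairwise (blk_pairwise d L) (Nat.zero_le k)
        rw [Nat.sub_self]
        omega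
  · intro k j
    rcases Nat.lt_or_ge k w.length with hk | hk
    · rw [List.take_append_of_le_length (by omega)]
      exact hy k j
    · rw [List.take_append, List.take_of_length_le hk, List.count_append, List.count_append]
      have h1 : ((blk d L).take (k - w.length)).count (j + 2) ≤ (blk d L).count (j + 2) :=
        (List.take_sublist _ _).count_le _
      have h2 := hcnt (j + 1)
      have h3 := hc (j + 1)
      have h4 := hc j
      have h5 := hdj (j + 1)
      have h6 := hfg j
      simp only [add_assoc, Nat.reduceAdd] at h2 h3
      omega
  · intro j
    rw [List.count_append, hc, hcnt, hdj]
  · rw [List.count_append, hc0, Nat.zero_add, List.count_eq_zero]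
    intro h0
    have := blk_mem h0
    omega
  · have e : (a ++ [m]).sum - 1 = w.length + (m - 1) := by simp [hlen]; omega
    rw [e, List.getD_append_right _ _ _ _ (by omega)]
    obtain ⟨k, hk, e⟩ := mem_getD hpm
    have := getD_mono_of_pairwise (blk_pairwise d L) (show k ≤ w.length + (m - 1) - w.length by omega)
    omega

/-! ### Consequences of having a filling -/

theorem count_eq_card (w : List ℕ) (c : ℕ) :
    w.count c = ((Finset.range w.length).filter (fun k => w.getD k 0 = c)).card := by
  induction w using List.reverseRecOn with
  | nil => simp
  | append_singleton w x ih =>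
    rw [List.count_append, ih, List.length_append, List.length_singleton, Finset.range_add_one,
      Finset.filter_insert]
    have e1 : (w ++ [x]).getD w.length 0 = x := by
      rw [List.getD_append_right _ _ _ _ (le_refl _)]; simp
    have e2 : (Finset.range w.length).filter (fun k => (w ++ [x]).getD k 0 = c) =
        (Finset.range w.length).filter (fun k => w.getD k 0 = c) := by
      apply Finset.filter_congr
      intro k hk
      rw [List.getD_append _ _ _ _ (Finset.mem_range.mp hk)]
    rw [e1, e2]
    split_ifs with hx
    · rw [Finset.card_insert_of_notMem (by simp)]
      simp [hx]
    · simp [hx]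

theorem card_le_count {w : List ℕ} {c : ℕ} (s : Finset ℕ)
    (hs : ∀ k ∈ s, k < w.length ∧ w.getD k 0 = c) : s.card ≤ w.count c := by
  rw [count_eq_card]
  apply Finset.card_le_card
  intro k hk
  have := hs k hk
  simp only [Finset.mem_filter, Finset.mem_range]
  exact this

theorem card_le_count2 {w : List ℕ} {c d : ℕ} (s : Finset ℕ)
    (hs : ∀ k ∈ s, k < w.length ∧ (w.getD k 0 = c ∨ w.getD k 0 = d)) :
    s.card ≤ w.count c + w.count d := by
  rw [count_eq_card, count_eq_card]
  refine le_trans (Finset.card_le_card ?_) (Finset.card_union_le _ _)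
  intro k hk
  have := hs k hk
  simp only [Finset.mem_union, Finset.mem_filter, Finset.mem_range]
  tauto

theorem count_add_card_le {w : List ℕ} {c : ℕ} (s : Finset ℕ)
    (hs : ∀ k ∈ s, k < w.length ∧ w.getD k 0 ≠ c) : w.count c + s.card ≤ w.length := by
  rw [count_eq_card, ← Finset.card_union_of_disjoint]
  · conv_rhs => rw [← Finset.card_range w.length]
    apply Finset.card_le_card
    intro k hk
    simp only [Finset.mem_union, Finset.mem_filter, Finset.mem_range] at hk ⊢
    rcases hk with h | h
    · exact h.1
    · exact (hs k h).1
  · rw [Finset.disjoint_left]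
    intro k hk hk'
    simp only [Finset.mem_filter] at hk
    exact (hs k hk').2 hk.2

theorem sum_count_eq (l : List ℕ) (i : ℕ) (h : ∀ x ∈ l, 1 ≤ x ∧ x ≤ i) :
    ∑ j ∈ Finset.range i, l.count (j + 1) = l.length := by
  induction l with
  | nil => simp
  | cons x l ih =>
    have hx := h x (by simp)
    simp only [List.count_cons, Finset.sum_add_distrib, List.length_cons]
    rw [ih (fun y hy => h y (by simp [hy]))]
    congr 1
    rw [Finset.sum_eq_single (x - 1)]
    · simp; omega
    · intro b _ hb
      have : ¬ (x = b + 1) := by omega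
      simp [this]
    · intro hx'
      simp at hx'
      omega

theorem ribbon_le {a w : List ℕ} {ov : ℕ → Bool} (hr : IsRibbonWord a ov w) (hy : IsYam w)
    (i : ℕ) (hi : i ≤ a.length) : ∀ k, k < (a.take i).sum → w.getD k 0 ≤ i := by
  induction i with
  | zero => intro k hk; simp at hk
  | succ i ih =>
    have ih := ih (by omega)
    intro k hk
    rcases Nat.lt_or_ge k (a.take i).sum with hk' | hk'
    · have := ih k hk'; omega
    rw [take_succ_sum] at hk
    obtain ⟨o, ho⟩ : ∃ o, o = (a.take i).sum := ⟨_, rfl⟩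
    have hdec : ∀ j, j < a.getD i 0 → w.getD (o + j) 0 ≤ w.getD o 0 := by
      intro j
      induction j with
      | zero => intro _; simp
      | succ j ihj =>
        intro hj
        have h1 := hr.2.1 i j (by omega) hj
        have h2 := ihj (by omega)
        rw [show rowOffset a i = o from ho.symm] at h1
        rw [← add_assoc]
        omega
    have h1 := hdec (k - o) (by omega)
    rw [show o + (k - o) = k by omega] at h1
    have hol : o < w.length := by
      have h3 := take_succ_sum a i
      have h4 := take_sum_le a (i + 1)
      rw [hr.1]; omega
    suffices w.getD o 0 ≤ i + 1 by omega
    by_contra hcon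
    obtain ⟨x, hx⟩ : ∃ x, w.getD o 0 = x + 2 := ⟨w.getD o 0 - 2, by omega⟩
    have h5 := hy (o + 1) x
    have e : w.take (o + 1) = w.take o ++ [x + 2] := by
      rw [List.take_succ_eq_append_getElem hol, ← hx, List.getD_eq_getElem _ _ hol]
    rw [e, List.count_append, List.count_append] at h5
    have h6 : 0 < (w.take o).count (x + 1) := by
      simp at h5
      omega
    obtain ⟨k', hk', e'⟩ := mem_getD (List.count_pos_iff.mp h6)
    have hk'' : k' < o := by
      simp at hk'; omega
    have h7 := ih k' (by omega)
    have e2 : (w.take o).getD k' 0 = w.getD k' 0 := by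
      rw [List.getD_eq_getElem _ _ hk', List.getD_eq_getElem _ _ (by omega : k' < w.length)]
      simp
    omega

theorem getD_pos_of_count {w : List ℕ} (h : w.count 0 = 0) {k : ℕ} (hk : k < w.length) :
    1 ≤ w.getD k 0 := by
  have h1 := getD_mem hk
  rw [List.count_eq_zero] at h
  by_contra hc
  exact h (by rwa [show w.getD k 0 = 0 by omega] at h1)

theorem getD_le_of_content {w nu : List ℕ} (h : HasContent w nu) {k : ℕ} (hk : k < w.length) :
    w.getD k 0 ≤ nu.length := by
  by_contra hc
  have h1 := getD_mem hk
  have h2 := h.1 (w.getD k 0 - 1)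
  rw [show w.getD k 0 - 1 + 1 = w.getD k 0 by omega, List.getD_eq_default nu _ (by omega)] at h2
  rw [List.count_eq_zero] at h2
  exact h2 h1

theorem support_sum {a w nu : List ℕ} {ov : ℕ → Bool} (hr : IsRibbonWord a ov w)
    (hc : HasContent w nu) : a.sum = nu.sum := by
  have h1 := sum_count_eq w nu.length (by
    intro x hx
    obtain ⟨k, hk, e⟩ := mem_getD hx
    rw [← e]
    exact ⟨getD_pos_of_count hc.2 hk, getD_le_of_content hc hk⟩)
  have h2 := take_sum_eq nu nu.length
  rw [List.take_length] at h2
  rw [← hr.1, ← h1, h2]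
  exact Finset.sum_congr rfl (fun j _ => hc.1 j)

theorem support_dom {a w nu : List ℕ} {ov : ℕ → Bool} (hr : IsRibbonWord a ov w) (hy : IsYam w)
    (hc : HasContent w nu) : DomLE a nu := by
  refine ⟨support_sum hr hc, ?_⟩
  have key : ∀ i, i ≤ a.length → (a.take i).sum ≤ (nu.take i).sum := by
    intro i hi
    have h0 : (a.take i).sum ≤ w.length := by rw [hr.1]; exact take_sum_le a i
    have h1 := sum_count_eq (w.take (a.take i).sum) i (by
      intro x hx
      obtain ⟨k, hk, e⟩ := mem_getD hx
      have hk' : k < (a.take i).sum := by simp at hk; omega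
      have e2 : (w.take (a.take i).sum).getD k 0 = w.getD k 0 := by
        rw [List.getD_eq_getElem _ _ hk, List.getD_eq_getElem _ _ (by omega : k < w.length)]
        simp
      rw [← e, e2]
      exact ⟨getD_pos_of_count hc.2 (by omega), ribbon_le hr hy i hi k hk'⟩)
    rw [List.length_take, min_eq_left h0] at h1
    rw [← h1, take_sum_eq nu]
    apply Finset.sum_le_sum
    intro j _
    rw [← hc.1 j]
    exact (List.take_sublist _ _).count_le _
  intro i
  rcases Nat.lt_or_ge a.length i with h | h
  · have h1 := key a.length (le_refl _)
    have h2 := take_sum_mono nu (Nat.le_of_lt h)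
    rw [List.take_of_length_le (Nat.le_of_lt h)]
    rw [List.take_length] at h1
    omega
  · exact key i h

/-! ### Existence of fillings -/

theorem sum_range_four {f : ℕ → ℕ} (hf : ∀ k, 4 ≤ k → f k = 0) {i : ℕ} (hi : 4 ≤ i) :
    ∑ j ∈ Finset.range i, f j = f 0 + f 1 + f 2 + f 3 := by
  induction i, hi using Nat.le_induction with
  | base => simp [Finset.sum_range_succ]
  | succ i hi ih => rw [Finset.sum_range_succ, ih, hf i hi]; rfl

/-- The function with four prescribed values, zero afterwards. -/
def fn4 (k1 k2 k3 k4 : ℕ) : ℕ → ℕ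
  | 0 => k1
  | 1 => k2
  | 2 => k3
  | 3 => k4
  | _ => 0

theorem fn4_zero (k1 k2 k3 k4 : ℕ) : ∀ k, 4 ≤ k → fn4 k1 k2 k3 k4 k = 0 := by
  intro k hk
  obtain ⟨j, rfl⟩ : ∃ j, k = j + 4 := ⟨k - 4, by omega⟩
  rfl

theorem fn4_eq {f : ℕ → ℕ} (hf : ∀ k, 4 ≤ k → f k = 0) : f = fn4 (f 0) (f 1) (f 2) (f 3) := by
  funext k
  match k with
  | 0 => rfl
  | 1 => rfl
  | 2 => rfl
  | 3 => rfl
  | k + 4 => exact hf _ (by omega)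

/-- Extension step for fillings with at most four distinct letters. -/
theorem sup_step4 {a : List ℕ} {ov : ℕ → Bool} {k1 k2 k3 k4 n1 n2 n3 n4 q p m : ℕ}
    (hpos : ∀ x ∈ a, 0 < x) (h : Sup a ov (fn4 k1 k2 k3 k4) q)
    (h1 : k1 ≤ n1) (h2 : k2 ≤ n2) (h3 : k3 ≤ n3) (h4 : k4 ≤ n4)
    (g1 : n2 ≤ k1) (g2 : n3 ≤ k2) (g3 : n4 ≤ k3)
    (hm : n1 + n2 + n3 + n4 = k1 + k2 + k3 + k4 + m)
    (hgap : a = [] ∨ ov (a.length - 1) = false ∨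
      ∃ q', q < q' ∧ fn4 k1 k2 k3 k4 q' < fn4 n1 n2 n3 n4 q')
    (hp : fn4 k1 k2 k3 k4 p < fn4 n1 n2 n3 n4 p) : Sup (a ++ [m]) ov (fn4 n1 n2 n3 n4) p := by
  refine sup_step (L := 4) hpos h ?_ ?_ (fn4_zero _ _ _ _) ?_ hgap hp
  · intro j
    match j with
    | 0 => exact h1
    | 1 => exact h2
    | 2 => exact h3
    | 3 => exact h4
    | j + 4 => exact le_refl 0
  · intro j
    match j with
    | 0 => exact g1
    | 1 => exact g2
    | 2 => exact g3
    | 3 => exact Nat.zero_le _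
    | j + 4 => exact le_refl 0
  · rw [sum_range_four (fn4_zero _ _ _ _) (le_refl _),
      sum_range_four (fn4_zero _ _ _ _) (le_refl _)]
    exact hm

theorem base_case (n1 n2 n3 n4 a1 a2 a3 a4 : ℕ) (ov : ℕ → Bool)
    (h12 : n2 ≤ n1) (h23 : n3 ≤ n2) (h34 : n4 ≤ n3)
    (hm : 2 ≤ a4) (ha3 : a4 ≤ a3) (ha2 : a3 ≤ a2) (ha1 : a2 ≤ a1)
    (hs : n1 + n2 + n3 + n4 = a1 + a2 + a3 + a4) (d1 : a1 ≤ n1) (d2 : a1 + a2 ≤ n1 + n2)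
    (d3 : a1 + a2 + a3 ≤ n1 + n2 + n3)
    (c1 : n1 + 3 ≤ a1 + a2 + a3 + a4) (c2 : n1 ≤ a1 + 1 → n2 + 2 ≤ a2 + a3 + a4)
    (c3 : n3 + 1 ≤ a3 + a4) : ∃ q, Sup [a1, a2, a3, a4] ov (fn4 n1 n2 n3 n4) q := by
  obtain ⟨x, y, u, v, t, e1, e2, e3, e4, e5, e6, e7, e8, e9, e10, e11, e12, e13, e14, e15, e16,
    e17⟩ := arith_base n1 n2 n3 n4 a1 a2 a3 a4 h12 h23 h34 hm ha3 ha2 ha1 hs d1 d2 d3 c1 c2 c3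
  have s0 : Sup [] ov (fn4 0 0 0 0) 0 := by
    have : fn4 0 0 0 0 = fun _ => 0 := (fn4_eq (f := fun _ => 0) (fun _ _ => rfl)).symm
    rw [this]
    exact sup_nil ov 0
  have s1 : Sup [a1] ov (fn4 a1 0 0 0) 0 :=
    sup_step4 (a := []) (m := a1) (by simp) s0 (by omega) (by omega) (by omega) (by omega)
      (by omega) (by omega) (by omega) (by omega) (Or.inl rfl) (show 0 < a1 by omega)
  have s2 : ∀ p, fn4 a1 0 0 0 p < fn4 x y 0 0 p → Sup [a1, a2] ov (fn4 x y 0 0) p := fun p hp =>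
    sup_step4 (a := [a1]) (m := a2) (by simp; omega) s1 (by omega) (by omega) (by omega)
      (by omega) (by omega) (by omega) (by omega) (by omega)
      (Or.inr (Or.inr ⟨1, by omega, show 0 < y by omega⟩)) hp
  have s3 : ∀ p, fn4 x y 0 0 p < fn4 u v t 0 p → Sup [a1, a2, a3] ov (fn4 u v t 0) p := by
    intro p hp
    rcases e16 with h | ⟨h, h'⟩
    · exact sup_step4 (a := [a1, a2]) (m := a3) (by simp; omega) (s2 1 (show 0 < y by omega))
        (by omega) (by omega) (by omega) (by omega) (by omega) (by omega) (by omega) (by omega)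
        (Or.inr (Or.inr ⟨2, by omega, show 0 < t by omega⟩)) hp
    · exact sup_step4 (a := [a1, a2]) (m := a3) (by simp; omega) (s2 0 h')
        (by omega) (by omega) (by omega) (by omega) (by omega) (by omega) (by omega) (by omega)
        (Or.inr (Or.inr ⟨1, by omega, h⟩)) hp
  have s4 : ∀ p q q', fn4 x y 0 0 q < fn4 u v t 0 q → q < q' →
      fn4 u v t 0 q' < fn4 n1 n2 n3 n4 q' → fn4 u v t 0 p < fn4 n1 n2 n3 n4 p →
      Sup [a1, a2, a3, a4] ov (fn4 n1 n2 n3 n4) p := by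
    intro p q q' hq hqq hq' hp
    exact sup_step4 (a := [a1, a2, a3]) (m := a4) (by simp; omega) (s3 q hq)
        (by omega) (by omega) (by omega) (by omega) (by omega) (by omega) (by omega) (by omega)
        (Or.inr (Or.inr ⟨q', hqq, hq'⟩)) hp
  rcases e17 with h | ⟨h, h' | h'⟩ | ⟨h, h'⟩
  · have h4 : fn4 u v t 0 3 < fn4 n1 n2 n3 n4 3 := show 0 < n4 by omega
    rcases Nat.lt_or_ge 0 t with ht | ht
    · exact ⟨3, s4 3 2 3 ht (by omega) h4 h4⟩
    · omega
  · exact ⟨2, s4 2 0 2 h' (by omega) h h⟩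
  · exact ⟨2, s4 2 1 2 h' (by omega) h h⟩
  · exact ⟨1, s4 1 0 1 h' (by omega) h h⟩

/-- The greedy removal of a strip of size `m` at row `r`. -/
def greedy (f : ℕ → ℕ) (m r : ℕ) : ℕ → ℕ := fun i =>
  if i < r then f i else if i = r then f r + f (r + 1) - m else f (i + 1)

theorem greedy_lt {f : ℕ → ℕ} {m r i : ℕ} (h : i < r) : greedy f m r i = f i := by
  simp [greedy, h]

theorem greedy_eq {f : ℕ → ℕ} {m r : ℕ} : greedy f m r r = f r + f (r + 1) - m := by
  simp [greedy]

theorem greedy_gt {f : ℕ → ℕ} {m r i : ℕ} (h : r < i) : greedy f m r i = f (i + 1) := by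
  simp [greedy, h.ne', Nat.not_lt_of_lt h]

theorem greedy_sum_le {f : ℕ → ℕ} {m r i : ℕ} (h : i ≤ r) :
    ∑ j ∈ Finset.range i, greedy f m r j = ∑ j ∈ Finset.range i, f j :=
  Finset.sum_congr rfl (fun j hj => greedy_lt (by have := Finset.mem_range.mp hj; omega))

theorem greedy_sum_gt {f : ℕ → ℕ} {m r i : ℕ} (hr : m ≤ f r) (h : r + 1 ≤ i) :
    ∑ j ∈ Finset.range i, greedy f m r j + m = ∑ j ∈ Finset.range (i + 1), f j := by
  induction i, h using Nat.le_induction with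
  | base =>
    rw [Finset.sum_range_succ, greedy_sum_le (le_refl _), greedy_eq, Finset.sum_range_succ,
      Finset.sum_range_succ]
    omega
  | succ i hi ih =>
    rw [Finset.sum_range_succ, greedy_gt (by omega), Finset.sum_range_succ _ (i + 1), ← ih]
    omega

theorem exists_strip_row {f g : ℕ → ℕ} {L m : ℕ} (hm : 0 < m)
    (h : ∑ j ∈ Finset.range L, f j = ∑ j ∈ Finset.range L, g j + m) : ∃ p, g p < f p := by
  by_contra hc
  push Not at hc
  have := Finset.sum_le_sum (s := Finset.range L) (fun j _ => hc j)
  omega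

theorem take_append_sum_le {b : List ℕ} {m i : ℕ} (h : ∀ x ∈ b, m ≤ x) (hi : i ≤ b.length) :
    (b.take i).sum + m ≤ ((b ++ [m]).take (i + 1)).sum := by
  rw [take_succ_sum, List.take_append_of_le_length hi]
  rcases Nat.lt_or_ge i b.length with h' | h'
  · rw [List.getD_append _ _ _ _ h']
    have := h _ (getD_mem h')
    omega
  · have : i = b.length := by omega
    subst this
    rw [List.getD_append_right _ _ _ _ (le_refl _)]
    simp

theorem main_exists (a1 a2 a3 a4 : ℕ) (ov : ℕ → Bool) (hov : ∀ i, 3 ≤ i → ov i = false)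
    (rest : List ℕ) : ∀ (f : ℕ → ℕ) (a : List ℕ), a = a1 :: a2 :: a3 :: a4 :: rest →
    a.Pairwise (· ≥ ·) → (∀ x ∈ a, 2 ≤ x) → Antitone f →
    (∀ k, a.length ≤ k → f k = 0) → ∑ j ∈ Finset.range a.length, f j = a.sum →
    (∀ i, i ≤ a.length → (a.take i).sum ≤ ∑ j ∈ Finset.range i, f j) →
    f 0 + 3 ≤ a.sum → (f 0 ≤ a1 + 1 → f 1 + 2 + a1 ≤ a.sum) →
    f 2 + 1 + a1 + a2 ≤ a.sum → ∃ q, Sup a ov f q := by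
  induction rest using List.reverseRecOn with
  | nil =>
    intro f a ha hp h2 hf hz hs hd c1 c2 c3
    subst ha
    have hz4 : ∀ k, 4 ≤ k → f k = 0 := fun k hk => hz k (by simpa using hk)
    rw [sum_range_four hz4 (by simp)] at hs
    have d1 := hd 1 (by simp)
    have d2 := hd 2 (by simp)
    have d3 := hd 3 (by simp)
    have m1 := hf (show 0 ≤ 1 by omega)
    have m2 := hf (show 1 ≤ 2 by omega)
    have m3 := hf (show 2 ≤ 3 by omega)
    simp [Finset.sum_range_succ] at *
    rw [fn4_eq hz4]
    apply base_case <;> omega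
  | append_singleton rest m ih =>
    intro f a ha hp h2 hf hz hs hd c1 c2 c3
    obtain ⟨b, hb⟩ : ∃ b, b = a1 :: a2 :: a3 :: a4 :: rest := ⟨_, rfl⟩
    have hab : a = b ++ [m] := by rw [ha, hb]; simp
    have hbl : 4 ≤ b.length := by rw [hb]; simp
    have hal : a.length = b.length + 1 := by rw [hab]; simp
    have hasum : a.sum = b.sum + m := by rw [hab]; simp
    have hbp : b.Pairwise (· ≥ ·) := by
      rw [hab, List.pairwise_append] at hp; exact hp.1
    have hbm : ∀ x ∈ b, m ≤ x := by
      rw [hab, List.pairwise_append] at hp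
      intro x hx
      exact hp.2.2 x hx m (by simp)
    have hb2 : ∀ x ∈ b, 2 ≤ x := fun x hx => h2 x (by rw [hab]; simp [hx])
    have hm2 : 2 ≤ m := h2 m (by rw [hab]; simp)
    have hbpos : ∀ x ∈ b, 0 < x := fun x hx => by have := hb2 x hx; omega
    have hda : ∀ i, i ≤ b.length → (b.take i).sum ≤ ∑ j ∈ Finset.range i, f j := by
      intro i hi
      have := hd i (by omega)
      rwa [hab, List.take_append_of_le_length hi] at this
    have hdb : ∀ i, i ≤ b.length → (b.take i).sum + m ≤ ∑ j ∈ Finset.range (i + 1), f j := by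
      intro i hi
      have h1 := hd (i + 1) (by omega)
      rw [hab] at h1
      have h3 := take_append_sum_le hbm hi
      omega
    have hovb : ov (b.length - 1) = false := hov _ (by omega)
    rw [hal] at hs hz
    rw [hasum] at hs c1 c2 c3
    -- it suffices to find the smaller shape
    suffices hsuf : ∃ g : ℕ → ℕ, (∀ j, g j ≤ f j) ∧ (∀ j, f (j + 1) ≤ g j) ∧
        (∀ k, b.length ≤ k → g k = 0) ∧ ∑ j ∈ Finset.range b.length, g j = b.sum ∧
        (∀ i, i ≤ b.length → (b.take i).sum ≤ ∑ j ∈ Finset.range i, g j) ∧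
        g 0 + 3 ≤ b.sum ∧ (g 0 ≤ a1 + 1 → g 1 + 2 + a1 ≤ b.sum) ∧
        g 2 + 1 + a1 + a2 ≤ b.sum by
      obtain ⟨g, g1, g2, g3, g4, g5, g6, g7, g8⟩ := hsuf
      have hanti : Antitone g := antitone_nat_of_succ_le (fun j => le_trans (g1 (j + 1)) (g2 j))
      obtain ⟨q, hq⟩ := ih g b hb hbp hb2 hanti g3 g4 g5 g6 g7 g8
      have hsum : ∑ j ∈ Finset.range (b.length + 1), f j =
          ∑ j ∈ Finset.range (b.length + 1), g j + m := by
        rw [hs, Finset.sum_range_succ g, g4, g3 _ (le_refl _)]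
        omega
      obtain ⟨p, hp⟩ := exists_strip_row (by omega) hsum
      refine ⟨p, ?_⟩
      rw [hab]
      exact sup_step hbpos hq g1 g2 hz hsum (Or.inr (Or.inl hovb)) hp
    have t1 : (b.take 1).sum = a1 := by rw [hb]; simp
    have t2 : (b.take 2).sum = a1 + a2 := by rw [hb]; simp
    have t3 : (b.take 3).sum = a1 + a2 + a3 := by rw [hb]; simp; omega
    have t4 : (b.take 4).sum = a1 + a2 + a3 + a4 := by rw [hb]; simp; omega
    have t5 := take_sum_le b 4
    have b4 : m ≤ a4 := hbm a4 (by rw [hb]; simp)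
    have b3 : a4 ≤ a3 ∧ a3 ≤ a2 ∧ a2 ≤ a1 := by
      rw [hb] at hbp
      simp at hbp
      omega
    rcases Nat.eq_zero_or_pos (f 4) with h4 | h4
    · have hz4 : ∀ k, 4 ≤ k → f k = 0 := fun k hk => by
        have := hf hk
        omega
      rw [sum_range_four hz4 (by omega)] at hs
      have d1 := hda 1 (by omega)
      have d2 := hda 2 (by omega)
      have d3 := hda 3 (by omega)
      simp only [Finset.sum_range_succ, Finset.sum_range_zero, zero_add] at d1 d2 d3
      obtain ⟨k1, k2, k3, k4, e1, e2, e3, e4, e5, e6, e7, e8, e9, e10, e11, e12, e13, e14⟩ :=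
        arith_step (f 0) (f 1) (f 2) (f 3) m a1 a2 a3 b.sum (hf (by omega)) (hf (by omega))
          (hf (by omega)) hm2 (by omega) (by omega) (by omega) (by omega) hs (by omega) (by omega)
          (by omega) (by omega) (by omega) (by omega) (by omega)
      refine ⟨fn4 k1 k2 k3 k4, ?_, ?_, ?_, ?_, ?_, e12, e13, e14⟩
      · intro j
        match j with
        | 0 => exact e1
        | 1 => exact e2
        | 2 => exact e3
        | 3 => exact e4
        | j + 4 => exact Nat.zero_le _
      · intro j
        match j with
        | 0 => exact e5
        | 1 => exact e6
        | 2 => exact e7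
        | 3 => exact (by rw [hz4 4 (le_refl _)]; exact Nat.zero_le _)
        | j + 4 => exact (by rw [hz4 _ (by omega)]; exact Nat.zero_le _)
      · intro k hk
        exact fn4_zero _ _ _ _ k (by omega)
      · rw [sum_range_four (fn4_zero _ _ _ _) hbl]
        exact e8
      · intro i hi
        match i with
        | 0 => simp
        | 1 => simp only [t1, Finset.sum_range_succ, Finset.sum_range_zero, zero_add, fn4]; omega
        | 2 => simp only [t2, Finset.sum_range_succ, Finset.sum_range_zero, zero_add, fn4]; omega
        | 3 => simp only [t3, Finset.sum_range_succ, Finset.sum_range_zero, zero_add, fn4]; omega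
        | i + 4 =>
          rw [sum_range_four (fn4_zero _ _ _ _) (by omega)]
          have := take_sum_le b (i + 4)
          simp only [fn4]
          omega
    · have hex : ∃ r, f (r + 1) < m := ⟨b.length, by rw [hz _ (le_refl _)]; omega⟩
      obtain ⟨r, hr1, hr2⟩ : ∃ r, f (r + 1) < m ∧ m ≤ f r := by
        classical
        refine ⟨Nat.find hex, Nat.find_spec hex, ?_⟩
        rcases Nat.eq_zero_or_pos (Nat.find hex) with h0 | h0
        · rw [h0]
          have := hda 1 (by omega)
          simp only [Finset.sum_range_succ, Finset.sum_range_zero, zero_add] at this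
          omega
        · have := Nat.find_min hex (show Nat.find hex - 1 < Nat.find hex by omega)
          rw [show Nat.find hex - 1 + 1 = Nat.find hex by omega] at this
          omega
      have hrb : r ≤ b.length := by
        by_contra hc
        have := hz r (by omega)
        omega
      have g1 : ∀ j, greedy f m r j ≤ f j := by
        intro j
        rcases Nat.lt_trichotomy j r with h | h | h
        · rw [greedy_lt h]
        · subst h; rw [greedy_eq]; omega
        · rw [greedy_gt h]; exact hf (by omega)
      have g2 : ∀ j, f (j + 1) ≤ greedy f m r j := by
        intro j
        rcases Nat.lt_trichotomy j r with h | h | h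
        · rw [greedy_lt h]; exact hf (by omega)
        · subst h; rw [greedy_eq]; omega
        · rw [greedy_gt h]
      have g4 : ∑ j ∈ Finset.range b.length, greedy f m r j = b.sum := by
        rcases Nat.lt_or_ge r b.length with h | h
        · have := greedy_sum_gt hr2 (show r + 1 ≤ b.length by omega)
          omega
        · have hrb' : r = b.length := by omega
          rw [greedy_sum_le h]
          have h1 := hda b.length (le_refl _)
          rw [List.take_length] at h1
          rw [Finset.sum_range_succ] at hs
          rw [hrb'] at hr2
          omega
      have g5 : ∀ i, i ≤ b.length →
          (b.take i).sum ≤ ∑ j ∈ Finset.range i, greedy f m r j := by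
        intro i hi
        rcases Nat.lt_or_ge r i with h | h
        · have h1 := greedy_sum_gt hr2 (show r + 1 ≤ i by omega)
          have h3 := hdb i hi
          omega
        · rw [greedy_sum_le h]; exact hda i hi
      have g3 : ∀ k, b.length ≤ k → greedy f m r k = 0 := by
        intro k hk
        rcases Nat.lt_or_ge r k with h | h
        · rw [greedy_gt h, hz _ (by omega)]
        · have hk' : k = r := by omega
          have hrb' : r = b.length := by omega
          have h1 := hda b.length (le_refl _)
          rw [List.take_length] at h1
          rw [Finset.sum_range_succ] at hs
          subst hk'
          rw [greedy_eq, hz (k + 1) (by omega), hrb']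
          omega
      have h3 : 1 ≤ greedy f m r 3 := le_trans h4 (g2 3)
      have hanti : Antitone (greedy f m r) :=
        antitone_nat_of_succ_le (fun j => le_trans (g1 (j + 1)) (g2 j))
      have m1 := hanti (show 2 ≤ 3 by omega)
      have m2 := hanti (show 1 ≤ 2 by omega)
      have hs4 : ∑ j ∈ Finset.range 4, greedy f m r j ≤
          ∑ j ∈ Finset.range b.length, greedy f m r j :=
        Finset.sum_le_sum_of_subset (by simpa using hbl)
      have d1 := g5 1 (by omega)
      have d2 := g5 2 (by omega)
      simp only [Finset.sum_range_succ, Finset.sum_range_zero, zero_add] at d1 d2 hs4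
      exact ⟨greedy f m r, g1, g2, g3, g4, g5, by omega, by omega, by omega⟩

/-! ### Support is contained in the interval; missing partitions -/

theorem ov_row {a w : List ℕ} {ov : ℕ → Bool} (hr : IsRibbonWord a ov w)
    (h2 : ∀ x ∈ a, 2 ≤ x) (i k : ℕ) (hk : k = i + 1) (hi : i + 1 < a.length) (ho : ov i = true) :
    (a.take k).sum < w.length ∧ (a.take i).sum + 2 ≤ (a.take k).sum ∧
    w.getD ((a.take k).sum - 1) 0 < w.getD (a.take k).sum 0 := by
  subst hk
  have h3 := take_succ_sum a (i + 1)
  have h4 := take_sum_le a (i + 1 + 1)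
  have h5 := take_succ_sum a i
  have h6 := h2 _ (getD_mem hi)
  have h7 := h2 _ (getD_mem (show i < a.length by omega))
  refine ⟨by rw [hr.1]; omega, by omega, hr.2.2 i hi ho⟩

theorem support_subset {a w nu : List ℕ} {ov : ℕ → Bool} (h2 : ∀ x ∈ a, 2 ≤ x)
    (h4 : 4 ≤ a.length) (ho : ∀ i, i < 3 → ov i = true) (hr : IsRibbonWord a ov w)
    (hc : HasContent w nu) : nu.getD 0 0 + 3 ≤ a.sum := by
  have r0 := ov_row hr h2 0 1 rfl (by omega) (ho 0 (by omega))
  have r1 := ov_row hr h2 1 2 rfl (by omega) (ho 1 (by omega))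
  have r2 := ov_row hr h2 2 3 rfl (by omega) (ho 2 (by omega))
  have q0 := getD_pos_of_count hc.2 (show (a.take 1).sum - 1 < w.length by omega)
  have q1 := getD_pos_of_count hc.2 (show (a.take 2).sum - 1 < w.length by omega)
  have q2 := getD_pos_of_count hc.2 (show (a.take 3).sum - 1 < w.length by omega)
  have key := count_add_card_le (w := w) (c := 1)
    {(a.take 1).sum, (a.take 2).sum, (a.take 3).sum} (by
      intro k hk
      simp only [Finset.mem_insert, Finset.mem_singleton] at hk
      rcases hk with rfl | rfl | rfl <;> omega)
  rw [Finset.card_insert_of_notMem, Finset.card_insert_of_notMem, Finset.card_singleton,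
    hr.1] at key
  · have := hc.1 0
    rw [zero_add] at this
    omega
  · simp only [Finset.mem_singleton]; omega
  · simp only [Finset.mem_insert, Finset.mem_singleton]; omega

theorem missing_one {a w : List ℕ} {ov : ℕ → Bool} {s : ℕ} (h2 : ∀ x ∈ a, 2 ≤ x)
    (h4 : 4 ≤ a.length) (ho : ∀ i, i < 3 → ov i = true) (hr : IsRibbonWord a ov w)
    (hy : IsYam w) (hc : HasContent w [a.getD 0 0 + 1, s]) : False := by
  have r0 := ov_row hr h2 0 1 rfl (by omega) (ho 0 (by omega))
  have r1 := ov_row hr h2 1 2 rfl (by omega) (ho 1 (by omega))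
  have r2 := ov_row hr h2 2 3 rfl (by omega) (ho 2 (by omega))
  have q1 := getD_pos_of_count hc.2 (show (a.take 2).sum - 1 < w.length by omega)
  have q2 := getD_pos_of_count hc.2 (show (a.take 3).sum - 1 < w.length by omega)
  have u1 := getD_le_of_content hc r1.1
  have u2 := getD_le_of_content hc r2.1
  simp only [List.length_cons, List.length_nil] at u1 u2
  have e : (a.take 1).sum = (a.take 0).sum + a.getD 0 0 := take_succ_sum a 0
  simp only [List.take_zero, List.sum_nil] at e
  have key := card_le_count (w := w) (c := 1)
    (insert ((a.take 2).sum - 1) (insert ((a.take 3).sum - 1)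
      (Finset.range (a.take 1).sum))) (by
      intro k hk
      simp only [Finset.mem_insert, Finset.mem_range] at hk
      rcases hk with rfl | rfl | hk
      · omega
      · omega
      · have h1 := ribbon_le hr hy 1 (by omega) k hk
        have h3 := getD_pos_of_count hc.2 (show k < w.length by omega)
        omega)
  rw [Finset.card_insert_of_notMem, Finset.card_insert_of_notMem, Finset.card_range] at key
  · have := hc.1 0
    rw [zero_add] at this
    simp only [List.getD_cons_zero] at this
    omega
  · simp only [Finset.mem_range]; omega
  · simp only [Finset.mem_insert, Finset.mem_range]; omega

theorem missing_two {a w : List ℕ} {ov : ℕ → Bool} {s : ℕ} (h2 : ∀ x ∈ a, 2 ≤ x)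
    (h4 : 4 ≤ a.length) (ho : ∀ i, i < 3 → ov i = true) (hr : IsRibbonWord a ov w)
    (hy : IsYam w) (hc : HasContent w [a.getD 0 0, a.getD 1 0, s]) : False := by
  have r1 := ov_row hr h2 1 2 rfl (by omega) (ho 1 (by omega))
  have r2 := ov_row hr h2 2 3 rfl (by omega) (ho 2 (by omega))
  have q2 := getD_pos_of_count hc.2 (show (a.take 3).sum - 1 < w.length by omega)
  have u2 := getD_le_of_content hc r2.1
  simp only [List.length_cons, List.length_nil] at u2
  have e : (a.take 1).sum = (a.take 0).sum + a.getD 0 0 := take_succ_sum a 0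
  simp only [List.take_zero, List.sum_nil] at e
  have e1 : (a.take 2).sum = (a.take 1).sum + a.getD 1 0 := take_succ_sum a 1
  have key := card_le_count2 (w := w) (c := 1) (d := 2)
    (insert ((a.take 3).sum - 1) (Finset.range (a.take 2).sum)) (by
      intro k hk
      simp only [Finset.mem_insert, Finset.mem_range] at hk
      rcases hk with rfl | hk
      · omega
      · have h1 := ribbon_le hr hy 2 (by omega) k hk
        have h3 := getD_pos_of_count hc.2 (show k < w.length by omega)
        omega)
  rw [Finset.card_insert_of_notMem, Finset.card_range] at key
  · have c0 := hc.1 0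
    have c1 := hc.1 1
    rw [zero_add] at c0
    rw [show 1 + 1 = 2 from rfl] at c1
    simp only [List.getD_cons_zero, List.getD_cons_succ] at c0 c1
    simp only [zero_add] at e
    omega
  · simp only [Finset.mem_range]; omega

theorem ovOf_true (N : ℕ) (hN : 1 ≤ N) (i : ℕ) (hi : i < 3) :
    ovOf ([3, 2, 1] ++ List.replicate N 0) i = true := by
  obtain ⟨M, rfl⟩ : ∃ M, N = M + 1 := ⟨N - 1, by omega⟩
  match i with
  | 0 => simp [ovOf]
  | 1 => simp [ovOf]
  | 2 => simp [ovOf, List.replicate_succ]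

theorem ovOf_false (N : ℕ) (i : ℕ) (hi : 3 ≤ i) :
    ovOf ([3, 2, 1] ++ List.replicate N 0) i = false := by
  have : ([3, 2, 1] ++ List.replicate N 0).getD i 0 = 0 := by
    rw [List.getD_append_right _ _ _ _ (by simpa using hi)]
    simp [List.getD_eq_getElem?_getD, List.getElem?_replicate]
    split_ifs <;> rfl
  simp only [ovOf, this]
  simp

/-- Corollary `cor:full` (b): for a partition `a` with parts ≥ 2,
`ℓ(a) ≥ 4` and overlapping partition `p = (3,2,1,0,…,0)`, the ribbon `R_a^p` has full Schur
support `[a, (|a|−3, 3)]` iff `a₁ < Σ_{q=2}^{ℓ(a)} a_q − 2` and `a₂ < Σ_{q=3}^{ℓ(a)} a_q`. -/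
theorem full_support_overlap_three_two_one
    (a : List ℕ) (ha : IsPartition a) (h2 : PartsGE a 2) (h4 : 4 ≤ a.length) :
    FullSupport a ([3, 2, 1] ++ List.replicate (a.length - 3) 0) ↔
      (a.getD 0 0 + 2 < (a.drop 1).sum ∧ a.getD 1 0 < (a.drop 2).sum) := by
  have hov1 := ovOf_true (a.length - 3) (by omega)
  have hov2 := ovOf_false (a.length - 3)
  have hp0 : ([3, 2, 1] ++ List.replicate (a.length - 3) 0).getD 0 0 = 3 := by simp
  have h2' : ∀ x ∈ a, 2 ≤ x := h2
  obtain ⟨a1, a2, a3, a4, rest, hae⟩ : ∃ a1 a2 a3 a4 rest, a = a1 :: a2 :: a3 :: a4 :: rest := by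
    match a, h4 with
    | a1 :: a2 :: a3 :: a4 :: rest, _ => exact ⟨a1, a2, a3, a4, rest, rfl⟩
  have A1 : a.getD 0 0 = a1 := by rw [hae]; rfl
  have A2 : a.getD 1 0 = a2 := by rw [hae]; rfl
  have S1 : a.sum = a1 + (a.drop 1).sum := by rw [hae]; simp
  have S2 : a.sum = a1 + a2 + (a.drop 2).sum := by rw [hae]; simp [add_assoc]
  have S3 : a3 + a4 ≤ (a.drop 2).sum := by rw [hae]; simp
  have t1 : (a.take 1).sum = a1 := by rw [hae]; simp
  have t2 : (a.take 2).sum = a1 + a2 := by rw [hae]; simp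
  have b1 : 2 ≤ a1 := h2' _ (by rw [hae]; simp)
  have b2 : 2 ≤ a2 := h2' _ (by rw [hae]; simp)
  have b3 : 2 ≤ a3 := h2' _ (by rw [hae]; simp)
  have b4 : 2 ≤ a4 := h2' _ (by rw [hae]; simp)
  have b12 : a2 ≤ a1 := by
    have := ha.1
    rw [hae] at this
    simp at this
    omega
  rw [A1, A2]
  obtain ⟨T, hT⟩ : ∃ T, T = (a.drop 1).sum := ⟨_, rfl⟩
  obtain ⟨T', hT'⟩ : ∃ T', T' = (a.drop 2).sum := ⟨_, rfl⟩
  rw [← hT] at S1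
  rw [← hT'] at S2 S3
  rw [← hT, ← hT']
  constructor
  · intro hfull
    refine ⟨?_, ?_⟩
    · by_contra hcon
      have hmem : [a1 + 1, T - 1] ∈
          IntervalSet a ([3, 2, 1] ++ List.replicate (a.length - 3) 0) := by
        refine ⟨⟨by simp; omega, by simp; omega⟩, ⟨by simp; omega, ?_⟩, ?_⟩
        · intro i
          match i with
          | 0 => simp
          | 1 => rw [t1]; simp
          | i + 2 =>
            have := take_sum_le a (i + 2)
            simp
            omega
        · rw [hp0]
          refine ⟨by simp; omega, ?_⟩
          intro i
          match i with
          | 0 => simp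
          | 1 => simp; omega
          | i + 2 => simp; omega
      rw [← hfull] at hmem
      obtain ⟨_, w, hr, hy, hc⟩ := hmem
      rw [← A1] at hc
      exact missing_one h2' h4 hov1 hr hy hc
    · by_contra hcon
      have hmem : [a1, a2, T'] ∈
          IntervalSet a ([3, 2, 1] ++ List.replicate (a.length - 3) 0) := by
        refine ⟨⟨by simp; omega, by simp; omega⟩, ⟨by simp; omega, ?_⟩, ?_⟩
        · intro i
          match i with
          | 0 => simp
          | 1 => rw [t1]; simp
          | 2 => rw [t2]; simp
          | i + 3 =>
            have := take_sum_le a (i + 3)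
            simp
            omega
        · rw [hp0]
          refine ⟨by simp; omega, ?_⟩
          intro i
          match i with
          | 0 => simp
          | 1 => simp; omega
          | 2 => simp; omega
          | i + 3 => simp; omega
      rw [← hfull] at hmem
      obtain ⟨_, w, hr, hy, hc⟩ := hmem
      rw [← A1, ← A2] at hc
      exact missing_two h2' h4 hov1 hr hy hc
  · rintro ⟨c1, c2⟩
    apply Set.Subset.antisymm
    · rintro nu ⟨hnu, w, hr, hy, hc⟩
      have hd := support_dom hr hy hc
      have hs := support_subset h2' h4 hov1 hr hc
      refine ⟨hnu, hd, ?_⟩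
      rw [hp0]
      refine ⟨by rw [← hd.1]; simp; omega, ?_⟩
      intro i
      match i with
      | 0 => simp
      | 1 =>
        have := take_succ_sum nu 0
        simp only [List.take_zero, List.sum_nil, zero_add] at this
        rw [this]
        simp only [List.take_succ_cons, List.take_zero, List.sum_cons, List.sum_nil]
        omega
      | i + 2 =>
        have h1 := take_sum_le nu (i + 2)
        have h3 := hd.1
        simp
        omega
    · rintro nu ⟨hnu, hd, hd'⟩
      rw [hp0] at hd'
      refine ⟨hnu, ?_⟩
      have hanti : Antitone (fun j => nu.getD j 0) := fun i j hij =>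
        getD_mono_of_pairwise hnu.1 hij
      have hdom : ∀ i, (a.take i).sum ≤ ∑ j ∈ Finset.range i, nu.getD j 0 := fun i => by
        rw [← take_sum_eq]; exact hd.2 i
      have htot : ∀ i, ∑ j ∈ Finset.range i, nu.getD j 0 ≤ a.sum := fun i => by
        rw [← take_sum_eq, hd.1]; exact take_sum_le nu i
      have hlen := hdom a.length
      have hlen' := htot a.length
      rw [List.take_length] at hlen
      have hzero : ∀ k, a.length ≤ k → nu.getD k 0 = 0 := by
        intro k hk
        have h1 := htot (a.length + 1)
        rw [Finset.sum_range_succ] at h1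
        have h3 : nu.getD k 0 ≤ nu.getD a.length 0 := hanti hk
        omega
      have n1 := hd'.2 1
      rw [take_sum_eq] at n1
      simp only [Finset.sum_range_one, List.take_succ_cons, List.take_zero, List.sum_cons,
        List.sum_nil] at n1
      have d1 := hdom 1
      have d2 := hdom 2
      have s3 := htot 3
      have m1 : nu.getD 1 0 ≤ nu.getD 0 0 := hanti (by omega)
      have m2 : nu.getD 2 0 ≤ nu.getD 1 0 := hanti (by omega)
      rw [t1] at d1
      rw [t2] at d2
      simp only [Finset.sum_range_succ, Finset.sum_range_zero, zero_add] at d1 d2 s3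
      obtain ⟨q, w, hr, hy, hc, hc0, _⟩ := main_exists a1 a2 a3 a4 _ hov2 rest
        (fun j => nu.getD j 0) a hae ha.1 h2' hanti hzero (le_antisymm hlen' hlen)
        (fun i _ => hdom i) (by show nu.getD 0 0 + 3 ≤ a.sum; omega)
        (by show nu.getD 0 0 ≤ a1 + 1 → nu.getD 1 0 + 2 + a1 ≤ a.sum; omega)
        (by show nu.getD 2 0 + 1 + a1 + a2 ≤ a.sum; omega)
      exact ⟨w, hr, hy, hc, hc0⟩


end RibbonSupport
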